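/- If Γ ⊩_⊞ Δ, then there exist a formula φ ∈ Γ with var(φ) ⊆ var(Δ) and a formula ψ ∈ Δ with var(ψ) ⊆ var(Γ); that is, the logic ⊩_⊞ is both a left-inclusion and a right-inclusion logic. -/

import Mathlib

/-- Formulas built from countably many propositional variables with a single
binary connective `⊞` (platypus). -/
inductive Fm : Type where
  | var : ℕ → Fm
  | pl : Fm → Fm → Fm
deriving DecidableEq

namespace Fm

/-- The set of propositional variables occurring in a formula. -/
def vars : Fm → Set ℕ
  | var n => {n}
  | pl a b => vars a ∪ vars b

/-- A `𝔅_⊞`-valuation: a two-valued function such that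
`v (φ ⊞ ψ) ∈ {min (v φ) (v ψ), max (v φ) (v ψ)}`. -/
def IsVal (v : Fm → Bool) : Prop :=
  ∀ a b : Fm, v (a.pl b) = (v a && v b) ∨ v (a.pl b) = (v a || v b)

/-- The multiple-conclusion consequence `Γ ⊩_⊞ Δ`. -/
def Mc (Γ Δ : Set Fm) : Prop :=
  ∀ v : Fm → Bool, IsVal v → (∀ φ ∈ Γ, v φ = true) → ∃ ψ ∈ Δ, v ψ = true

/-- The single-conclusion consequence `Γ ⊢_⊞ φ`. -/
def Sc (Γ : Set Fm) (φ : Fm) : Prop := Mc Γ {φ}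

end Fm

open Fm in
/-- `⊩_⊞` is a left- and right-inclusion logic: if `Γ ⊩_⊞ Δ`
then some `φ ∈ Γ` has all its variables among those of `Δ`, and some `ψ ∈ Δ`
has all its variables among those of `Γ`. -/
theorem platypus_inclusion (Γ Δ : Set Fm) (h : Mc Γ Δ) :
    (∃ φ ∈ Γ, φ.vars ⊆ ⋃ ψ ∈ Δ, ψ.vars) ∧
    (∃ ψ ∈ Δ, ψ.vars ⊆ ⋃ φ ∈ Γ, φ.vars) := by
  classical
  constructor
  · by_contra hc
    push Not at hc
    obtain ⟨ψ, hψ, hv⟩ := h (fun φ => decide (¬ φ.vars ⊆ ⋃ ψ ∈ Δ, ψ.vars))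
      (fun a b => by
        right
        simp only [Fm.vars, Set.union_subset_iff]
        by_cases h1 : a.vars ⊆ ⋃ ψ ∈ Δ, ψ.vars <;>
          by_cases h2 : b.vars ⊆ ⋃ ψ ∈ Δ, ψ.vars <;> simp only [h1, h2] <;> decide)
      (fun φ hφ => decide_eq_true (hc φ hφ))
    exact of_decide_eq_true hv (Set.subset_biUnion_of_mem (u := fun ψ : Fm => ψ.vars) hψ)
  · obtain ⟨ψ, hψ, hv⟩ := h (fun ψ => decide (ψ.vars ⊆ ⋃ φ ∈ Γ, φ.vars))
      (fun a b => by
        left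
        simp only [Fm.vars, Set.union_subset_iff]
        exact Bool.decide_and _ _)
      (fun φ hφ => decide_eq_true
        (Set.subset_biUnion_of_mem (u := fun φ : Fm => φ.vars) hφ))
    exact ⟨ψ, hψ, of_decide_eq_true hv⟩
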